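/- arXiv:1709.04292 — 2 statements merged into one kernel-verified Lean document; each statement's English description precedes it below -/
import Mathlib

section
/- There exists a μ-conull subset X_∞ of X satisfying: for each x ∈ X_∞ there exists an integer ℓ(x) such that, for all ℓ ≥ ℓ(x) and for each n with n_{ℓ−1} ≤ n ≤ n_ℓ − ℓ, x ∈ C_n but x is neither in the first hundred nor in the last hundred occurrences of tower n inside tower n_ℓ. -/
/-!
Every `x ∈ X` lies in some `C_N`, hence in `C_n` for all `n ≥ N`, and from then on `x` has
ternary digits `t_n(x) ∈ {1,2,3}`. The index of the occurrence of tower `n` inside tower `m`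
containing `x` has ternary digits `t_n(x) - 1, …, t_{m-1}(x) - 1` (least significant first).
Since `100 < 3^5`, being in the first (resp. last) hundred occurrences forces `t_r(x) = 1`
(resp. `t_r(x) = 3`) for all `n + 5 ≤ r < m`: see `NFCseq.digit_eq_one_of_first` and
`NFCseq.digit_eq_three_of_last`. When `m = n_ℓ` and `n ≤ n_ℓ - ℓ`, this covers all `r` in
`[n_ℓ - (ℓ - 5), n_ℓ)`, an interval that does not depend on `n`, so one event for each `ℓ` and
each of the two digits suffices.

The points of `C_N` with such a run of `ℓ - 5` equal digits are covered by at most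
`h_N · 3^(n_ℓ - ℓ + 5)` levels of tower `n_ℓ` (`NFCseq.constRun_cover`), each of measure
`3^(-n_ℓ)`; their measure is thus at most `h_N · 3^(-(ℓ - 5))`
(`NFC.measure_constRun_le`), which is summable in `ℓ`. The Borel–Cantelli lemma, applied for
each `N`, gives the conull set (`NFC.ae_eventually_notMem_constRun`).
-/

open MeasureTheory Set Filter Topology
open scoped ENNReal
open scoped Classical

noncomputable section

/-! ## The nearly finite Chacon transformation: symbolic model -/

/-- The alphabet `{*} ∪ ℕ` is modelled by `Option ℕ`, `none` playing the role of `*`. -/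
instance optionNatTop : TopologicalSpace (Option ℕ) := ⊥

/-- The data of the two sequences `(n_ℓ)` and `(ℓ_k)` used in the construction of the
nearly finite Chacon transformation, together with the growth conditions imposed on them. -/
structure NFCseq where
  nseq : ℕ → ℕ
  lseq : ℕ → ℕ
  nseq_zero : nseq 0 = 0
  lseq_zero : lseq 0 = 1
  lseq_strictMono : StrictMono lseq
  nseq_growth : ∀ ℓ : ℕ, 1 ≤ ℓ → nseq (ℓ - 1) + 2 * ℓ < nseq ℓ
  lseq_growth : ∀ k : ℕ, (2 : ℝ) ≤ (1 + ((7 : ℝ) ^ k)⁻¹) ^ (lseq (k + 1) - lseq k)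

namespace NFCseq

/-- `k(ℓ)`: the unique `k` with `ℓ_k ≤ ℓ < ℓ_{k+1}`. -/
def kOf (P : NFCseq) (ℓ : ℕ) : ℕ := sSup {k | P.lseq k ≤ ℓ}

/-- The heights `h_n` of the towers. -/
def hgt (P : NFCseq) : ℕ → ℕ
  | 0 => 1
  | n + 1 =>
    3 * P.hgt n +
      3 * (if hn : ∃ ℓ, 1 ≤ ℓ ∧ P.nseq ℓ = n then P.hgt (n - P.kOf (Nat.find hn)) else 0) + 1
termination_by n => n
decreasing_by all_goals omega

theorem hgt_pos (P : NFCseq) (n : ℕ) : 0 < P.hgt n := by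
  cases n with
  | zero => simp [hgt]
  | succ n => rw [hgt]; omega

/-- The number of spacers put above the first subcolumn at step `n+1`
(`h_{n-k(ℓ)}` if `n = n_ℓ`, and `0` otherwise). -/
def spa (P : NFCseq) (n : ℕ) : ℕ :=
  if hn : ∃ ℓ, 1 ≤ ℓ ∧ P.nseq ℓ = n then P.hgt (n - P.kOf (Nat.find hn)) else 0

/-- The map `p_n` sending the index of a level of tower `n+1` to the index of the level of
tower `n` containing it (`none` if that level lies outside tower `n`). -/
def pmap (P : NFCseq) (n j : ℕ) : Option ℕ :=
  if j < P.hgt n then some j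
  else if j < P.hgt n + P.spa n then none
  else if j < 2 * P.hgt n + P.spa n then some (j - (P.hgt n + P.spa n))
  else if j < 2 * P.hgt n + 2 * P.spa n + 1 then none
  else if j < 3 * P.hgt n + 2 * P.spa n + 1 then some (j - (2 * P.hgt n + 2 * P.spa n + 1))
  else none

/-- The defining property of points of the space `X`. -/
def Xspec (P : NFCseq) (x : ℕ → Option ℕ) : Prop :=
  (∀ n, x n = (x (n + 1)).bind (P.pmap n)) ∧ ∃ n, x n ≠ none

/-- The space `X` of the symbolic model, with its product (subspace) topology. -/
abbrev Xpt (P : NFCseq) : Type := {x : ℕ → Option ℕ // P.Xspec x}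

instance (P : NFCseq) : MeasurableSpace P.Xpt := borel _

/-- `L_n^j`, the `j`-th level of tower `n`. -/
def level (P : NFCseq) (n j : ℕ) : Set P.Xpt := {x | x.1 n = some j}

/-- `C_n`, the union of all levels of tower `n`. -/
def tower (P : NFCseq) (n : ℕ) : Set P.Xpt := {x | x.1 n ≠ none}

theorem pmap_zero (P : NFCseq) (n : ℕ) : P.pmap n 0 = some 0 := by
  unfold pmap
  simp [P.hgt_pos n]

/-- The point `𝟎 = (0,0,…)`. -/
def zeroPt (P : NFCseq) : P.Xpt :=
  ⟨fun _ => some 0, fun n => by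
    show some 0 = (some 0).bind (P.pmap n)
    simp [P.pmap_zero n], 0, by simp⟩

/-- `t_n(x) ∈ {1,2,3}`: the subcolumn of tower `n` to which `x` belongs
(junk value `0` if `x` is not in tower `n+1`). -/
def tcol (P : NFCseq) (n : ℕ) (x : P.Xpt) : ℕ :=
  match x.1 (n + 1) with
  | none => 0
  | some j =>
    if j < P.hgt n + P.spa n then 1
    else if j < 2 * P.hgt n + 2 * P.spa n + 1 then 2
    else 3

/-- The index (from `0` to `3^(m-n) - 1`, ordered from bottom to top of tower `m`) of the
occurrence of tower `n` inside tower `m` to which `x` belongs. -/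
def occIdx (P : NFCseq) (n m : ℕ) (x : P.Xpt) : ℕ :=
  ∑ r ∈ Finset.Ico n m, (P.tcol r x - 1) * 3 ^ (r - n)

/-- `x` belongs to one of the first hundred occurrences of tower `n` inside tower `m`. -/
def inFirstHundred (P : NFCseq) (n m : ℕ) (x : P.Xpt) : Prop := P.occIdx n m x < 100

/-- `x` belongs to one of the last hundred occurrences of tower `n` inside tower `m`. -/
def inLastHundred (P : NFCseq) (n m : ℕ) (x : P.Xpt) : Prop :=
  3 ^ (m - n) ≤ P.occIdx n m x + 100

end NFCseq

/-- The nearly finite Chacon transformation `T` together with its invariant measure `μ`. -/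
structure NFC extends NFCseq where
  T : toNFCseq.Xpt → toNFCseq.Xpt
  μ : Measure toNFCseq.Xpt
  T_inj : Function.Injective T
  T_range : Set.range T = {toNFCseq.zeroPt}ᶜ
  T_up : ∀ x : toNFCseq.Xpt, ∃ N : ℕ, ∀ n, N ≤ n →
    ∃ j : ℕ, x.1 n = some j ∧ (T x).1 n = some (j + 1)
  T_meas : Measurable T
  μ_level : ∀ n j : ℕ, j < toNFCseq.hgt n →
    μ (toNFCseq.level n j) = (3 : ℝ≥0∞)⁻¹ ^ n
  μ_pres : MeasurePreserving T μ μ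
  μ_sfin : SigmaFinite μ

namespace NFC

/-- `X^d`. -/
abbrev Xd (S : NFC) (d : ℕ) : Type := Fin d → S.toNFCseq.Xpt

/-- The Cartesian power `T^{×d}`. -/
def Td (S : NFC) (d : ℕ) : S.Xd d → S.Xd d := fun y i => S.T (y i)

/-- `C_n^d`. -/
def towerD (S : NFC) (d n : ℕ) : Set (S.Xd d) := {y | ∀ i, y i ∈ S.toNFCseq.tower n}

/-- `B` is an `n`-box. -/
def IsNBox (S : NFC) (d n : ℕ) (B : Set (S.Xd d)) : Prop :=
  ∃ v : Fin d → ℕ, (∀ i, v i < S.toNFCseq.hgt n) ∧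
    B = {y : S.Xd d | ∀ i, y i ∈ S.toNFCseq.level n (v i)}

/-- A measure on `X^d` is Radon iff it is finite on each `C_n^d`. -/
def IsRadon (S : NFC) (d : ℕ) (σ : Measure (S.Xd d)) : Prop :=
  ∀ n, σ (S.towerD d n) < ⊤

/-- `σ` is `T^{×d}`-invariant. -/
def InvariantD (S : NFC) (d : ℕ) (σ : Measure (S.Xd d)) : Prop :=
  ∀ A : Set (S.Xd d), MeasurableSet A → σ ((S.Td d) ⁻¹' A) = σ A

/-- `T^{-e} A`, the preimage of `A` under `T^e` for `e ∈ ℤ` (image for negative `e`). -/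
def preT (S : NFC) : ℤ → Set S.toNFCseq.Xpt → Set S.toNFCseq.Xpt
  | Int.ofNat k, A => S.T^[k] ⁻¹' A
  | Int.negSucc k, A => S.T^[k + 1] '' A

/-- `σ` is a graph measure arising from powers of `T` on `X^ι`:
`σ(∏ᵢ Aᵢ) = α · μ(⋂ᵢ T^{-eᵢ} Aᵢ)`. -/
def IsGraphMeasure (S : NFC) {ι : Type} (σ : Measure (ι → S.toNFCseq.Xpt)) : Prop :=
  ∃ α : ℝ≥0∞, 0 < α ∧ α ≠ ⊤ ∧ ∃ e : ι → ℤ,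
    ∀ A : ι → Set S.toNFCseq.Xpt, (∀ i, MeasurableSet (A i)) →
      σ (Set.univ.pi A) = α * S.μ (⋂ i, S.preT (e i) (A i))

/-- `σ = σ^{D_1} ⊗ ⋯ ⊗ σ^{D_r}` for a partition `D_1, …, D_r` of `{1,…,d}` where each
`σ^{D_j}` is a graph measure on `X^{D_j}` arising from powers of `T`. -/
def IsProductOfGraphMeasures (S : NFC) (d : ℕ) (σ : Measure (S.Xd d)) : Prop :=
  ∃ (r : ℕ) (D : Fin r → Finset (Fin d)),
    (∀ j, (D j).Nonempty) ∧
    (∀ j j', j ≠ j' → Disjoint (D j) (D j')) ∧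
    (∀ i : Fin d, ∃ j, i ∈ D j) ∧
    ∃ σD : ∀ j : Fin r, Measure ({i // i ∈ D j} → S.toNFCseq.Xpt),
      (∀ j, S.IsGraphMeasure (σD j)) ∧
      ∀ A : Fin d → Set S.toNFCseq.Xpt, (∀ i, MeasurableSet (A i)) →
        σ (Set.univ.pi A) =
          ∏ j : Fin r, σD j (Set.univ.pi fun i : {i // i ∈ D j} => A i.1)

end NFC


/-- `(T)^j W` for `j ∈ ℤ`: forward images for `j ≥ 0`, preimages for `j < 0`. -/
def iterZ {α : Type*} (f : α → α) : ℤ → Set α → Set α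
  | Int.ofNat k, A => f^[k] '' A
  | Int.negSucc k, A => f^[k + 1] ⁻¹' A

namespace NFC

/-- `σ` is totally dissipative: there is a wandering set `W` whose `ℤ`-orbit covers
`X^d` up to a `σ`-null set. -/
def TotallyDissipative (S : NFC) (d : ℕ) (σ : Measure (S.Xd d)) : Prop :=
  ∃ W : Set (S.Xd d), MeasurableSet W ∧
    (∀ j j' : ℤ, j ≠ j' → Disjoint (iterZ (S.Td d) j W) (iterZ (S.Td d) j' W)) ∧
    σ (⋃ j : ℤ, iterZ (S.Td d) j W)ᶜ = 0

/-- The ring `𝓡` of finite unions of `n`-boxes. -/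
def BoxRing (S : NFC) (d : ℕ) : Set (Set (S.Xd d)) :=
  {B | ∃ n : ℕ, ∃ 𝔅 : Finset (Set (S.Xd d)), (∀ b ∈ 𝔅, S.IsNBox d n b) ∧ B = ⋃₀ ↑𝔅}

/-- Convergence of a sequence of Radon measures on `X^d`. -/
def RTendsto (S : NFC) (d : ℕ) (σk : ℕ → Measure (S.Xd d)) (σ : Measure (S.Xd d)) : Prop :=
  ∀ n : ℕ, 0 < σ (S.towerD d n) →
    (∀ᶠ k in atTop, 0 < σk k (S.towerD d n)) ∧
    ∀ B : Set (S.Xd d), S.IsNBox d n B →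
      Tendsto (fun k => σk k B / σk k (S.towerD d n)) atTop
        (𝓝 (σ B / σ (S.towerD d n)))

/-- The edge `∂C_n^d` of `C_n^d`. -/
def edgeD (S : NFC) (d n : ℕ) : Set (S.Xd d) :=
  {y | y ∈ S.towerD d n ∧ ∃ i, y i ∈ S.toNFCseq.level n 0 ∨
    y i ∈ S.toNFCseq.level n (S.toNFCseq.hgt n - 1)}

/-- `Ω_m`: the union of all `m`-boxes `L_m^{j_1} × ⋯ × L_m^{j_d}` with `j_i ≠ 0` for all `i`. -/
def OmegaD (S : NFC) (d m : ℕ) : Set (S.Xd d) :=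
  {y | ∀ i, ∃ j : ℕ, j ≠ 0 ∧ j < S.toNFCseq.hgt m ∧ y i ∈ S.toNFCseq.level m j}

/-- A twisting transformation on `X^d`: it applies `T` to the coordinates in a nonempty
proper subset `G_1 ⊆ {1,…,d}` and the identity to the others. -/
def IsTwist (S : NFC) (d : ℕ) (Sw : S.Xd d → S.Xd d) : Prop :=
  ∃ G : Fin d → Bool, (∃ i, G i = true) ∧ (∃ i, G i = false) ∧
    ∀ (y : S.Xd d) (i : Fin d), Sw y i = if G i then S.T (y i) else y i

/-- The empirical measure `γ_J = ∑_{j ∈ J} δ_{(T^{×d})^j x}` along a two-sided orbit `o`. -/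
def emp (S : NFC) (d : ℕ) (o : ℤ → S.Xd d) (J : Finset ℤ) : Measure (S.Xd d) :=
  ∑ j ∈ J, Measure.dirac (o j)

end NFC

/-- `J` is a (nonempty finite) interval of `ℤ`. -/
def IsIntervalZ (J : Finset ℤ) : Prop := ∃ a b : ℤ, a ≤ b ∧ J = Finset.Icc a b

namespace NFC

/-- `J` is an `n`-crossing for the orbit `o` of a point of `X^d`: a maximal interval on which
the orbit stays in `C_n^d` with all the `t_n(T^j x_i)` constant. -/
def IsCrossing (S : NFC) (d : ℕ) (o : ℤ → S.Xd d) (n : ℕ) (J : Finset ℤ) : Prop :=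
  IsIntervalZ J ∧
  (∀ j ∈ J, o j ∈ S.towerD d n) ∧
  (∀ i : Fin d, ∀ j ∈ J, ∀ j' ∈ J, S.toNFCseq.tcol n (o j i) = S.toNFCseq.tcol n (o j' i)) ∧
  ∀ J' : Finset ℤ, J ⊆ J' → IsIntervalZ J' →
    (∀ j ∈ J', o j ∈ S.towerD d n) →
    (∀ i : Fin d, ∀ j ∈ J', ∀ j' ∈ J', S.toNFCseq.tcol n (o j i) = S.toNFCseq.tcol n (o j' i)) →
    J' = J

/-- An `n`-crossing is synchronized if `t_n(T^j x_1) = ⋯ = t_n(T^j x_d)` on it. -/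
def IsSync (S : NFC) (d : ℕ) (o : ℤ → S.Xd d) (n : ℕ) (J : Finset ℤ) : Prop :=
  ∀ j ∈ J, ∀ i i' : Fin d, S.toNFCseq.tcol n (o j i) = S.toNFCseq.tcol n (o j i')

end NFC

/-- The interval `I_n` of length `h_n` centered at `0`. -/
def Imid (P : NFCseq) (n : ℕ) : Finset ℤ :=
  Finset.Icc (-((P.hgt n / 2 : ℕ) : ℤ)) (-((P.hgt n / 2 : ℕ) : ℤ) + P.hgt n - 1)

namespace NFC

/-- A substantial `n`-crossing: an `n`-crossing whose intersection with `I_n` has at least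
`η·h_n` elements. -/
def IsSubstantial (S : NFC) (d : ℕ) (o : ℤ → S.Xd d) (η : ℝ) (n : ℕ) (J : Finset ℤ) : Prop :=
  S.IsCrossing d o n J ∧ η * S.toNFCseq.hgt n ≤ ((J ∩ Imid S.toNFCseq n).card : ℝ)

/-- `x_i` climbs into tower `n` along the interval `I`. -/
def Climbs (S : NFC) (d : ℕ) (o : ℤ → S.Xd d) (i : Fin d) (n : ℕ) (I : Finset ℤ) : Prop :=
  (∀ j ∈ I, (o j) i ∈ S.toNFCseq.tower n) ∧
  ¬ ∃ j : ℤ, j ∈ I ∧ j + 1 ∈ I ∧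
      (o j) i ∈ S.toNFCseq.level n (S.toNFCseq.hgt n - 1) ∧
      (o (j + 1)) i ∈ S.toNFCseq.level n 0

end NFC

/-- The nearly finite Chacon system together with the conull set `X_∞` and the function
`x ↦ ℓ(x)` of Lemma 2.3. -/
structure NFCX extends NFC where
  Xinf : Set toNFCseq.Xpt
  ellx : toNFCseq.Xpt → ℕ
  Xinf_conull : μ Xinfᶜ = 0
  Xinf_spec : ∀ x ∈ Xinf, ∀ ℓ : ℕ, ellx x ≤ ℓ → ∀ n : ℕ,
    nseq (ℓ - 1) ≤ n → n + ℓ ≤ nseq ℓ →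
      x ∈ toNFCseq.tower n ∧ ¬ toNFCseq.inFirstHundred n (nseq ℓ) x ∧
        ¬ toNFCseq.inLastHundred n (nseq ℓ) x

namespace NFCX

/-- `o` is the two-sided orbit of a `σ`-typical point `x = o 0` (satisfying
conditions (1), (2) and (3) of Section 3.4 of the paper). -/
def IsTypicalOrbit (S : NFCX) (d : ℕ) (σ : Measure (S.toNFC.Xd d))
    (o : ℤ → S.toNFC.Xd d) : Prop :=
  (∀ j : ℤ, S.toNFC.Td d (o j) = o (j + 1)) ∧
  (∀ j : ℤ, ∀ n : ℕ, 0 < σ (S.toNFC.towerD d n) →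
    ∀ B : Set (S.toNFC.Xd d), S.toNFC.IsNBox d n B →
    ∀ a b : ℕ → ℤ, (∀ k, a k ≤ 0) → (∀ k, 0 ≤ b k) →
      Tendsto (fun k => b k - a k) atTop atTop →
      Tendsto (fun k =>
          (((Finset.Icc (a k) (b k)).filter (fun j' => o (j + j') ∈ B)).card : ℝ) /
            (((Finset.Icc (a k) (b k)).filter
              (fun j' => o (j + j') ∈ S.toNFC.towerD d n)).card : ℝ))
        atTop (𝓝 ((σ B).toReal / (σ (S.toNFC.towerD d n)).toReal))) ∧
  (∀ n : ℕ, ∀ B : Set (S.toNFC.Xd d), S.toNFC.IsNBox d n B → o 0 ∈ B → 0 < σ B) ∧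
  (∀ i : Fin d, (o 0) i ∈ S.Xinf)

end NFCX

/-! ## Subsets of `ℤ` of order `ℓ` inside an interval -/

/-- A piece of `F ∩ I`: a maximal interval included in `F ∩ I`. -/
def IsPieceZ (F : Set ℤ) (I : Finset ℤ) (J : Finset ℤ) : Prop :=
  IsIntervalZ J ∧ (↑J : Set ℤ) ⊆ F ∩ ↑I ∧
    ∀ J' : Finset ℤ, IsIntervalZ J' → (↑J' : Set ℤ) ⊆ F ∩ ↑I → J ⊆ J' → J' = J

/-- A hole of `F ∩ I`: a maximal interval included in `I \ F`. -/
def IsHoleZ (F : Set ℤ) (I : Finset ℤ) (J : Finset ℤ) : Prop :=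
  IsIntervalZ J ∧ (↑J : Set ℤ) ⊆ (↑I : Set ℤ) \ F ∧
    ∀ J' : Finset ℤ, IsIntervalZ J' → (↑J' : Set ℤ) ⊆ (↑I : Set ℤ) \ F → J ⊆ J' → J' = J

/-- Each hole of `F ∩ I` has size at most `s`. -/
def HolesSmall (F : Set ℤ) (I : Finset ℤ) (s : ℕ) : Prop :=
  ∀ H : Finset ℤ, IsHoleZ F I H → H.card ≤ s

/-- Two consecutive holes of `F ∩ I` are always separated by a piece of size at least `c`. -/
def HolesSeparated (F : Set ℤ) (I : Finset ℤ) (c : ℕ) : Prop :=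
  ∀ H₁ H₂ : Finset ℤ, IsHoleZ F I H₁ → IsHoleZ F I H₂ →
    (∀ a ∈ H₁, ∀ b ∈ H₂, a < b) →
    ∃ J : Finset ℤ, IsPieceZ F I J ∧ c ≤ J.card ∧ ∀ a ∈ H₁, ∀ b ∈ H₂, ∀ x ∈ J, a < x ∧ x < b

/-- `F` is of order `ℓ ≥ 1` inside the interval `I`, with respect to the sequences `c`, `s`. -/
def IsOrder (c s : ℕ → ℕ) : ℕ → Set ℤ → Finset ℤ → Prop
  | 0, _, _ => False
  | 1, F, I => HolesSmall F I (s 1) ∧ HolesSeparated F I (c 1)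
  | (ℓ + 2), F, I => ∃ F' : Set ℤ, F ⊆ F' ∧ HolesSmall F' I (s (ℓ + 2)) ∧
      HolesSeparated F' I (c (ℓ + 2)) ∧
      ∀ J : Finset ℤ, IsPieceZ F' I J → IsOrder c s (ℓ + 1) F J

/-- `p_1`: the smallest integer such that `3^{p_1} > 2d+1` and `p_1 > d`. -/
def pOne (d : ℕ) : ℕ := sInf {p : ℕ | 2 * d + 1 < 3 ^ p ∧ d < p}

/-- `p_2`: the smallest integer such that `1/3^{p_2} < η/3`. -/
def pTwo (η : ℝ) : ℕ := sInf {p : ℕ | ((3 : ℝ) ^ p)⁻¹ < η / 3}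


/-! ### The digits `t_r` and the levels containing a point -/

namespace NFCseq

/-- Position, inside tower `r + 1`, of the bottom level of the `c`-th copy of tower `r`
(for `c ∈ {1,2,3}`; any other `c` is treated as `3`). -/
def copyBase (P : NFCseq) (r c : ℕ) : ℕ :=
  if c = 1 then 0
  else if c = 2 then P.hgt r + P.spa r
  else 2 * P.hgt r + 2 * P.spa r + 1

theorem lt_hgt_of_eq_some (P : NFCseq) (x : P.Xpt) {n j : ℕ} (h : x.1 n = some j) :
    j < P.hgt n := by
  rw [x.2.1 n, Option.bind_eq_some_iff] at h
  obtain ⟨i, -, hi⟩ := h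
  unfold pmap at hi
  split_ifs at hi <;> simp only [Option.some.injEq] at hi <;> omega

/-- A point of `L_r^j` has a genuine digit `t_r ∈ {1,2,3}`, and that digit determines the level
of tower `r + 1` containing the point. -/
theorem digit_spec (P : NFCseq) (x : P.Xpt) {r j : ℕ} (h : x.1 r = some j) :
    (P.tcol r x = 1 ∨ P.tcol r x = 2 ∨ P.tcol r x = 3) ∧
      x.1 (r + 1) = some (j + P.copyBase r (P.tcol r x)) := by
  have h' := h
  rw [x.2.1 r, Option.bind_eq_some_iff] at h'
  obtain ⟨i, hi, hp⟩ := h'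
  have ht : P.tcol r x = if i < P.hgt r + P.spa r then 1
      else if i < 2 * P.hgt r + 2 * P.spa r + 1 then 2 else 3 := by
    unfold tcol; rw [hi]
  rw [ht, hi]
  unfold copyBase
  unfold pmap at hp
  split_ifs at hp ⊢ <;> simp_all <;> omega

theorem exists_some_of_le (P : NFCseq) (x : P.Xpt) {N n : ℕ} (hx : x.1 N ≠ none) (h : N ≤ n) :
    ∃ j, x.1 n = some j := by
  induction n, h using Nat.le_induction with
  | base => exact Option.ne_none_iff_exists'.mp hx
  | succ n _ ih =>
    obtain ⟨j, hj⟩ := ih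
    exact ⟨_, (P.digit_spec x hj).2⟩

theorem digit_mem (P : NFCseq) (x : P.Xpt) {N r : ℕ} (hx : x.1 N ≠ none) (h : N ≤ r) :
    P.tcol r x = 1 ∨ P.tcol r x = 2 ∨ P.tcol r x = 3 := by
  obtain ⟨j, hj⟩ := P.exists_some_of_le x hx h
  exact (P.digit_spec x hj).1

/-! ### Extreme occurrences force a long run of equal digits -/

/-- The numbers `occIdx < 100 < 3^5` have no nonzero ternary digit of weight at least `3^5`. -/
theorem digit_eq_one_of_first (P : NFCseq) (x : P.Xpt) {n m r : ℕ} (hx : x.1 n ≠ none)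
    (h : P.inFirstHundred n m x) (hr : n + 5 ≤ r) (hrm : r < m) : P.tcol r x = 1 := by
  have hle : (P.tcol r x - 1) * 3 ^ (r - n) ≤ P.occIdx n m x :=
    Finset.single_le_sum (f := fun r => (P.tcol r x - 1) * 3 ^ (r - n))
      (fun _ _ => Nat.zero_le _) (Finset.mem_Ico.mpr ⟨by omega, hrm⟩)
  have hpow : 3 ^ 5 ≤ 3 ^ (r - n) := Nat.pow_le_pow_right (by norm_num) (by omega)
  unfold inFirstHundred at h
  rcases P.digit_mem x hx (show n ≤ r by omega) with h1 | h1 | h1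
  · exact h1
  all_goals rw [h1] at hle; omega

/-- Replacing each digit `t_r` by `4 - t_r` reverses the order of the occurrences. -/
theorem occIdx_add_reflect (P : NFCseq) (x : P.Xpt) {n m : ℕ} (hx : x.1 n ≠ none) (h : n ≤ m) :
    P.occIdx n m x + ∑ r ∈ Finset.Ico n m, (3 - P.tcol r x) * 3 ^ (r - n) + 1 = 3 ^ (m - n) := by
  unfold occIdx
  induction m, h using Nat.le_induction with
  | base => simp
  | succ m hm ih =>
    rw [Finset.sum_Ico_succ_top hm, Finset.sum_Ico_succ_top hm, Nat.succ_sub hm, pow_succ]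
    rcases P.digit_mem x hx hm with h1 | h1 | h1 <;> rw [h1] <;> omega

theorem digit_eq_three_of_last (P : NFCseq) (x : P.Xpt) {n m r : ℕ} (hx : x.1 n ≠ none)
    (h : P.inLastHundred n m x) (hr : n + 5 ≤ r) (hrm : r < m) : P.tcol r x = 3 := by
  have hle : (3 - P.tcol r x) * 3 ^ (r - n) ≤
      ∑ r ∈ Finset.Ico n m, (3 - P.tcol r x) * 3 ^ (r - n) :=
    Finset.single_le_sum (f := fun r => (3 - P.tcol r x) * 3 ^ (r - n))
      (fun _ _ => Nat.zero_le _) (Finset.mem_Ico.mpr ⟨by omega, hrm⟩)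
  have hpow : 3 ^ 5 ≤ 3 ^ (r - n) := Nat.pow_le_pow_right (by norm_num) (by omega)
  have hsum := P.occIdx_add_reflect x hx (show n ≤ m by omega)
  unfold inLastHundred at h
  rcases P.digit_mem x hx (show n ≤ r by omega) with h1 | h1 | h1
  · rw [h1] at hle; omega
  · rw [h1] at hle; omega
  · exact h1

/-! ### Measure of a run of equal digits -/

/-- The points of `C_N` whose digits `t_r` are equal to `c` for all `a ≤ r < b`. -/
def constRun (P : NFCseq) (N a b c : ℕ) : Set P.Xpt :=
  {x | x ∈ P.tower N ∧ ∀ r, a ≤ r → r < b → P.tcol r x = c}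

/-- Passing from tower `b` to tower `b + 1`, a level splits into three, but only one of the
three survives when the digit `t_b` is prescribed (that is, when `b ≥ a`). -/
theorem constRun_cover (P : NFCseq) (N a b c : ℕ) (hb : N ≤ b) :
    ∃ F : Finset ℕ, F.card ≤ P.hgt N * 3 ^ (min a b) ∧
      P.constRun N a b c ⊆ ⋃ j ∈ F, P.level b j := by
  induction b, hb using Nat.le_induction with
  | base =>
    refine ⟨Finset.range (P.hgt N), ?_, fun x hx => ?_⟩
    · rw [Finset.card_range]
      exact Nat.le_mul_of_pos_right _ (by positivity)
    · obtain ⟨j, hj⟩ := Option.ne_none_iff_exists'.mp hx.1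
      simp only [mem_iUnion]
      exact ⟨j, Finset.mem_range.mpr (P.lt_hgt_of_eq_some x hj), hj⟩
  | succ b hb ih =>
    obtain ⟨F, hF, hcov⟩ := ih
    have hstep : ∀ x ∈ P.constRun N a (b + 1) c, ∃ j ∈ F, x.1 b = some j := by
      intro x hx
      have := hcov (show x ∈ P.constRun N a b c from ⟨hx.1, fun r h1 h2 => hx.2 r h1 (by omega)⟩)
      simp only [mem_iUnion] at this
      obtain ⟨j, hj, hxj⟩ := this
      exact ⟨j, hj, hxj⟩
    by_cases hab : a ≤ b
    · refine ⟨F.image (fun j => j + P.copyBase b c), ?_, fun x hx => ?_⟩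
      · rw [min_eq_left (by omega)]
        rw [min_eq_left hab] at hF
        exact Finset.card_image_le.trans hF
      · obtain ⟨j, hj, hxj⟩ := hstep x hx
        have h2 := (P.digit_spec x hxj).2
        rw [hx.2 b hab (by omega)] at h2
        simp only [mem_iUnion]
        exact ⟨_, Finset.mem_image_of_mem _ hj, h2⟩
    · refine ⟨(F ×ˢ {1, 2, 3}).image (fun q => q.1 + P.copyBase b q.2), ?_, fun x hx => ?_⟩
      · refine Finset.card_image_le.trans ?_
        rw [Finset.card_product, min_eq_right (by omega), pow_succ, ← mul_assoc]
        rw [min_eq_right (by omega)] at hF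
        exact Nat.mul_le_mul hF (by simp)
      · obtain ⟨j, hj, hxj⟩ := hstep x hx
        obtain ⟨h1, h2⟩ := P.digit_spec x hxj
        simp only [mem_iUnion]
        refine ⟨_, Finset.mem_image.mpr ⟨(j, P.tcol b x), Finset.mem_product.mpr ⟨hj, ?_⟩, rfl⟩, h2⟩
        simpa using h1

end NFCseq

namespace NFC

theorem measure_level_le (S : NFC) (n j : ℕ) :
    S.μ (S.toNFCseq.level n j) ≤ (3 : ℝ≥0∞)⁻¹ ^ n := by
  by_cases h : j < S.toNFCseq.hgt n
  · exact (S.μ_level n j h).le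
  · have : S.toNFCseq.level n j = ∅ :=
      eq_empty_of_forall_notMem fun x hx => h (S.toNFCseq.lt_hgt_of_eq_some x hx)
    simp [this]

/-- The factor `h_N` is far from optimal, but only the geometric decay in the length `k` of the
run matters. -/
theorem measure_constRun_le (S : NFC) (N a k c : ℕ) (h : N ≤ a + k) :
    S.μ (S.toNFCseq.constRun N a (a + k) c) ≤ S.toNFCseq.hgt N * (3 : ℝ≥0∞)⁻¹ ^ k := by
  obtain ⟨F, hF, hcov⟩ := S.toNFCseq.constRun_cover N a (a + k) c h
  rw [min_eq_left (by omega)] at hF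
  calc S.μ (S.toNFCseq.constRun N a (a + k) c)
      ≤ ∑ j ∈ F, S.μ (S.toNFCseq.level (a + k) j) :=
        (measure_mono hcov).trans (measure_biUnion_finset_le _ _)
    _ ≤ F.card * (3 : ℝ≥0∞)⁻¹ ^ (a + k) := by
        rw [← nsmul_eq_mul]
        exact Finset.sum_le_card_nsmul _ _ _ fun j _ => S.measure_level_le _ j
    _ ≤ ((S.toNFCseq.hgt N * 3 ^ a : ℕ) : ℝ≥0∞) * (3 : ℝ≥0∞)⁻¹ ^ (a + k) := by
        gcongr
    _ = S.toNFCseq.hgt N * (3 : ℝ≥0∞)⁻¹ ^ k := by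
        have h3 : (3 : ℝ≥0∞) ^ a * (3 : ℝ≥0∞)⁻¹ ^ a = 1 := by
          rw [← mul_pow, ENNReal.mul_inv_cancel (by norm_num) (by norm_num), one_pow]
        push_cast
        rw [pow_add, mul_assoc, ← mul_assoc _ _ ((3 : ℝ≥0∞)⁻¹ ^ k), h3, one_mul]

theorem index_le_nseq (S : NFC) (ℓ : ℕ) : ℓ ≤ S.nseq ℓ := by
  rcases Nat.eq_zero_or_pos ℓ with rfl | h
  · exact Nat.zero_le _
  · have := S.nseq_growth ℓ h
    omega

/-- Borel–Cantelli for the runs filling `[n_ℓ - (ℓ - 5), n_ℓ)`. The index is shifted,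
`ℓ = i + N + 5`, so that every run considered starts with `N ≤ ℓ ≤ n_ℓ` and the subtraction
`n_ℓ - (i + N)` is not truncated. -/
theorem ae_eventually_notMem_constRun (S : NFC) (N c : ℕ) :
    ∀ᵐ x ∂S.μ, ∀ᶠ i in atTop, x ∉ S.toNFCseq.constRun N
      (S.nseq (i + N + 5) - (i + N)) (S.nseq (i + N + 5)) c := by
  refine ae_eventually_notMem (ne_top_of_le_ne_top (b := ∑' i : ℕ,
    (S.toNFCseq.hgt N : ℝ≥0∞) * (3 : ℝ≥0∞)⁻¹ ^ i) ?_ (ENNReal.tsum_le_tsum fun i => ?_))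
  · rw [ENNReal.tsum_mul_left, ENNReal.tsum_geometric]
    refine ENNReal.mul_ne_top (ENNReal.natCast_ne_top _) (ENNReal.inv_ne_top.mpr ?_)
    exact (tsub_pos_of_lt (ENNReal.inv_lt_one.mpr (by norm_num))).ne'
  · have hle := S.index_le_nseq (i + N + 5)
    have h := S.measure_constRun_le N (S.nseq (i + N + 5) - (i + N)) (i + N) c (by omega)
    rw [Nat.sub_add_cancel (by omega)] at h
    refine h.trans ?_
    have h3 : (3 : ℝ≥0∞)⁻¹ ≤ 1 := ENNReal.inv_le_one.mpr (by norm_num)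
    exact mul_le_mul_right (pow_le_pow_of_le_one zero_le h3 (by omega)) _

end NFC

/-- There exists a `μ`-conull subset `X_∞` of `X` such that each
`x ∈ X_∞` has an `ℓ(x)` with: for all `ℓ ≥ ℓ(x)` and all `n` with
`n_{ℓ−1} ≤ n ≤ n_ℓ − ℓ`, `x ∈ C_n` but `x` is neither in the first hundred nor in the
last hundred occurrences of tower `n` inside tower `n_ℓ`. -/
theorem stmt5 (S : NFC) :
    ∃ Xinf : Set S.toNFCseq.Xpt, S.μ Xinfᶜ = 0 ∧
      ∀ x ∈ Xinf, ∃ L : ℕ, ∀ ℓ : ℕ, L ≤ ℓ → ∀ n : ℕ,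
        S.nseq (ℓ - 1) ≤ n → n + ℓ ≤ S.nseq ℓ →
          x ∈ S.toNFCseq.tower n ∧
          ¬ S.toNFCseq.inFirstHundred n (S.nseq ℓ) x ∧
          ¬ S.toNFCseq.inLastHundred n (S.nseq ℓ) x := by
  refine ⟨{x | ∀ N c : ℕ, ∀ᶠ i in atTop, x ∉ S.toNFCseq.constRun N
      (S.nseq (i + N + 5) - (i + N)) (S.nseq (i + N + 5)) c}, ?_, fun x hx => ?_⟩
  · exact mem_ae_iff.mp (ae_all_iff.mpr fun N => ae_all_iff.mpr fun c =>
      S.ae_eventually_notMem_constRun N c)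
  obtain ⟨N, hN⟩ := x.2.2
  obtain ⟨L₁, hL₁⟩ := eventually_atTop.mp (hx N 1)
  obtain ⟨L₃, hL₃⟩ := eventually_atTop.mp (hx N 3)
  refine ⟨max L₁ L₃ + N + 6, fun ℓ hℓ n hn hnℓ => ?_⟩
  have hNn : N ≤ n := by
    have := S.index_le_nseq (ℓ - 1)
    omega
  have hxn : x.1 n ≠ none := by
    obtain ⟨j, hj⟩ := S.toNFCseq.exists_some_of_le x hN hNn
    simp [hj]
  obtain ⟨i, rfl⟩ : ∃ i, ℓ = i + N + 5 := ⟨ℓ - (N + 5), by omega⟩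
  refine ⟨hxn, fun hfirst => ?_, fun hlast => ?_⟩
  · exact hL₁ i (by omega) ⟨hN, fun r hr hrm =>
      S.toNFCseq.digit_eq_one_of_first x hxn hfirst (by omega) hrm⟩
  · exact hL₃ i (by omega) ⟨hN, fun r hr hrm =>
      S.toNFCseq.digit_eq_three_of_last x hxn hlast (by omega) hrm⟩
end
end

section
/- Let (σ_k) be a sequence of Radon measures on X^d, and assume there exists an integer n̲ ≥ 0 such that σ_k(C_{n̲}^d) > 0 for all large enough k, and for each n > n̲ the sequence (σ_k(C_n^d)/σ_k(C_{n̲}^d))_k is bounded. Then there exist a subsequence (k_j) and a nonzero Radon measure σ on X^d such that (σ_{k_j}) converges to σ. -/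
/-!
Normalize `σ_k` to `τ_k = σ_k / σ_k(C_{n̲}^d)`. Since `[0,∞]` is compact, along a fixed
non-principal ultrafilter `τ_k(A)` has a limit for every set `A`. On the ring of compact open
subsets of `X^d` this limit is finitely additive, and compactness makes it countably
subadditive, so by Carathéodory it extends to a Borel measure `σ` (`exists_ultralimit_measure`).
The compact open sets generate the Borel sets because each `C_n^d` is compact and open and these
sets cover the totally disconnected space `X^d` (`NFC.isTopologicalBasis_compactOpen`).

Then `σ(C_{n̲}^d) = 1`, so `σ ≠ 0`, and the assumed bounds make `σ` Radon. Finally there are only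
countably many boxes and towers, so the ultrafilter limit of the vector of all their
`τ_k`-measures, being a cluster point in a first countable space, is reached along a subsequence;
taking quotients gives the convergence of `σ_{k_j}` to `σ`.
-/

open MeasureTheory Set Filter Topology
open scoped ENNReal
open scoped Classical

noncomputable section

/-! ### A limit measure along an ultrafilter -/

/-- Limits of measures along an ultrafilter, tested on compact open sets, define a measure.
Finite additivity passes to the limit, and countable subadditivity on the ring of compact open
sets is automatic, since a countable cover of a compact set by open sets has a finite subcover. -/
theorem exists_ultralimit_measure {α : Type*} [TopologicalSpace α] [T2Space α]
    [SecondCountableTopology α] [MeasurableSpace α] [BorelSpace α]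
    (hbasis : TopologicalSpace.IsTopologicalBasis {s : Set α | IsCompact s ∧ IsOpen s})
    (U : Ultrafilter ℕ) (τ : ℕ → Measure α) :
    ∃ σ : Measure α, ∀ A : Set α, IsCompact A → IsOpen A →
      Tendsto (fun k => τ k A) U (𝓝 (σ A)) := by
  have hlim : ∀ A : Set α, ∃ a : ℝ≥0∞, Tendsto (fun k => τ k A) U (𝓝 a) := fun A =>
    ⟨_, (U.map fun k => τ k A).le_nhds_lim⟩
  choose L hL using hlim
  have hring : IsSetRing {s : Set α | IsCompact s ∧ IsOpen s} :=
    { empty_mem := ⟨isCompact_empty, isOpen_empty⟩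
      union_mem := fun s t hs ht => ⟨hs.1.union ht.1, hs.2.union ht.2⟩
      sdiff_mem := fun s t hs ht => ⟨hs.1.diff ht.2, hs.2.sdiff ht.1.isClosed⟩ }
  let m : AddContent ℝ≥0∞ {s : Set α | IsCompact s ∧ IsOpen s} :=
    { toFun := L
      empty' := by
        refine tendsto_nhds_unique (hL ∅) ?_
        simp
      sUnion' := by
        intro I hI hdis _
        refine tendsto_nhds_unique (hL _) ?_
        have hsum : ∀ k, τ k (⋃₀ ↑I) = ∑ u ∈ I, τ k u := by
          intro k
          rw [sUnion_eq_biUnion]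
          exact measure_biUnion_finset hdis fun u hu => (hI hu).2.measurableSet
        simp only [hsum]
        exact tendsto_finsetSum _ fun u _ => hL u }
  have hsub : m.IsSigmaSubadditive := by
    intro f hf hU
    obtain ⟨t, ht⟩ := hU.1.elim_finite_subcover f (fun i => (hf i).2) subset_rfl
    have hfin : L (⋃ i, f i) ≤ ∑ i ∈ t, L (f i) := by
      refine le_of_tendsto_of_tendsto' (hL _) (tendsto_finsetSum t fun i _ => hL (f i)) fun k => ?_
      exact (measure_mono ht).trans (measure_biUnion_finset_le t f)
    exact hfin.trans (ENNReal.sum_le_tsum t)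
  have hgen : ‹MeasurableSpace α› = MeasurableSpace.generateFrom
      {s : Set α | IsCompact s ∧ IsOpen s} := by
    rw [BorelSpace.measurable_eq (α := α)]
    exact hbasis.borel_eq_generateFrom
  refine ⟨m.measure hring.isSetSemiring hgen.le hsub, fun A hAc hAo => ?_⟩
  rw [m.measure_eq hring.isSetSemiring hgen hsub ⟨hAc, hAo⟩]
  exact hL A

/-! ### Topology of `X` and `X^d` -/

instance : DiscreteTopology (Option ℕ) := ⟨rfl⟩

instance (P : NFCseq) : BorelSpace P.Xpt := ⟨rfl⟩

instance (P : NFCseq) : SecondCountableTopology P.Xpt :=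
  have : SecondCountableTopology (Option ℕ) :=
    DiscreteTopology.secondCountableTopology_of_countable
  TopologicalSpace.secondCountableTopology_induced _ _ _

namespace NFCseq

theorem lt_hgt_of_pmap (P : NFCseq) {n j i : ℕ} (h : P.pmap n j = some i) : i < P.hgt n := by
  unfold pmap at h
  split_ifs at h <;> simp at h <;> omega

theorem lt_hgt (P : NFCseq) (x : P.Xpt) {n i : ℕ} (h : x.1 n = some i) : i < P.hgt n := by
  rw [x.2.1 n, Option.bind_eq_some_iff] at h
  obtain ⟨j, -, hj⟩ := h
  exact P.lt_hgt_of_pmap hj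

theorem tower_mono (P : NFCseq) : Monotone P.tower := by
  refine monotone_nat_of_le_succ fun n x hx hx' => hx ?_
  rw [x.2.1 n, hx', Option.bind_none]

theorem continuous_coord (P : NFCseq) (n : ℕ) : Continuous fun x : P.Xpt => x.1 n :=
  (continuous_apply n).comp continuous_subtype_val

theorem isOpen_tower (P : NFCseq) (n : ℕ) : IsOpen (P.tower n) :=
  (isOpen_discrete {none}ᶜ).preimage (P.continuous_coord n)

theorem isClopen_level (P : NFCseq) (n j : ℕ) : IsClopen (P.level n j) :=
  (isClopen_discrete {some j}).preimage (P.continuous_coord n)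

/-- The tower `C_n` is homeomorphic to a closed subset of a product of finite sets. -/
theorem isCompact_tower (P : NFCseq) (n : ℕ) : IsCompact (P.tower n) := by
  refine (Topology.IsInducing.subtypeVal (t := P.Xspec)).isCompact_iff.2 ?_
  have hK : IsCompact (Set.univ.pi fun m : ℕ =>
      ({none} ∪ some '' Set.Iio (P.hgt m) : Set (Option ℕ))) :=
    isCompact_univ_pi fun m =>
      ((Set.finite_singleton none).union ((Set.finite_Iio _).image some)).isCompact
  have hcl : IsClosed {x : ℕ → Option ℕ |
      (∀ m, x m = (x (m + 1)).bind (P.pmap m)) ∧ x n ≠ none} := by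
    have h1 : IsClosed {x : ℕ → Option ℕ | ∀ m, x m = (x (m + 1)).bind (P.pmap m)} := by
      rw [ofPred_forall]
      exact isClosed_iInter fun m => isClosed_eq (continuous_apply m)
        ((continuous_of_discreteTopology (f := fun o : Option ℕ => o.bind (P.pmap m))).comp
          (continuous_apply (m + 1)))
    have h2 : IsClosed {x : ℕ → Option ℕ | x n ≠ none} :=
      (isClosed_discrete ({none}ᶜ : Set (Option ℕ))).preimage
        (continuous_apply (A := fun _ : ℕ => Option ℕ) n)
    exact h1.inter h2
  convert hK.inter_right hcl using 1
  ext x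
  constructor
  · rintro ⟨y, hy, rfl⟩
    refine ⟨fun m _ => ?_, y.2.1, hy⟩
    cases h : y.1 m with
    | none => exact Or.inl rfl
    | some i => exact Or.inr ⟨i, P.lt_hgt y h, rfl⟩
  · rintro ⟨-, hx, hn⟩
    exact ⟨⟨x, hx, n, hn⟩, hn, rfl⟩

end NFCseq

namespace NFC

theorem towerD_mono (S : NFC) (d : ℕ) : Monotone (S.towerD d) :=
  fun _ _ h _ hy i => S.toNFCseq.tower_mono h (hy i)

theorem towerD_eq_pi (S : NFC) (d n : ℕ) :
    S.towerD d n = Set.univ.pi fun _ => S.toNFCseq.tower n := by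
  ext y
  simp [towerD]

theorem isCompact_towerD (S : NFC) (d n : ℕ) : IsCompact (S.towerD d n) := by
  rw [towerD_eq_pi]
  exact isCompact_univ_pi fun _ => S.toNFCseq.isCompact_tower n

theorem isOpen_towerD (S : NFC) (d n : ℕ) : IsOpen (S.towerD d n) := by
  rw [towerD_eq_pi]
  exact isOpen_set_pi Set.finite_univ fun _ _ => S.toNFCseq.isOpen_tower n

theorem exists_mem_towerD (S : NFC) (d : ℕ) (y : S.Xd d) : ∃ n, y ∈ S.towerD d n := by
  choose N hN using fun i => (y i).2.2
  exact ⟨Finset.univ.sup N, fun i =>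
    S.toNFCseq.tower_mono (Finset.le_sup (Finset.mem_univ i)) (hN i)⟩

/-- The `n`-box with coordinates `v`. -/
def box (S : NFC) (d n : ℕ) (v : Fin d → ℕ) : Set (S.Xd d) :=
  {y | ∀ i, y i ∈ S.toNFCseq.level n (v i)}

theorem isClopen_box (S : NFC) (d n : ℕ) (v : Fin d → ℕ) : IsClopen (S.box d n v) := by
  rw [box, ofPred_forall]
  exact isClopen_iInter_of_finite fun i =>
    (S.toNFCseq.isClopen_level n (v i)).preimage (continuous_apply i)

theorem isCompact_box (S : NFC) (d n : ℕ) (v : Fin d → ℕ) : IsCompact (S.box d n v) := by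
  refine (S.isCompact_towerD d n).of_isClosed_subset (S.isClopen_box d n v).1 fun y hy i => ?_
  have h : (y i).1 n = some (v i) := hy i
  simp [NFCseq.tower, h]

instance (S : NFC) (d : ℕ) : LocallyCompactSpace (S.Xd d) := by
  have : WeaklyLocallyCompactSpace (S.Xd d) := ⟨fun y => by
    obtain ⟨n, hn⟩ := S.exists_mem_towerD d y
    exact ⟨_, S.isCompact_towerD d n, (S.isOpen_towerD d n).mem_nhds hn⟩⟩
  infer_instance

/-- The compact open sets form a basis of the topology of `X^d`: inside a tower `C_n^d`, which is
compact and open, clopen sets are compact, and clopen sets form a basis since `X^d` is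
locally compact and totally disconnected. -/
theorem isTopologicalBasis_compactOpen (S : NFC) (d : ℕ) :
    TopologicalSpace.IsTopologicalBasis {s : Set (S.Xd d) | IsCompact s ∧ IsOpen s} := by
  refine TopologicalSpace.isTopologicalBasis_of_isOpen_of_nhds (fun s hs => hs.2) fun y V hy hV => ?_
  obtain ⟨n, hn⟩ := S.exists_mem_towerD d y
  obtain ⟨W, hW, hyW, hWV⟩ :=
    (loc_compact_Haus_tot_disc_of_zero_dim (H := S.Xd d)).exists_subset_of_mem_open
      (show y ∈ V ∩ S.towerD d n from ⟨hy, hn⟩) (hV.inter (S.isOpen_towerD d n))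
  exact ⟨W, ⟨(S.isCompact_towerD d n).of_isClosed_subset hW.1 (hWV.trans inter_subset_right),
    hW.2⟩, hyW, hWV.trans inter_subset_left⟩

end NFC

/-! ### Extraction of the subsequence -/

/-- If `σ_k(C_{n̲}^d) > 0` for all large `k` and the ratios
`σ_k(C_n^d)/σ_k(C_{n̲}^d)` are bounded in `k` for each `n > n̲`, then some subsequence of
`(σ_k)` converges to a nonzero Radon measure on `X^d`. -/
theorem stmt8 (S : NFC) (d : ℕ) (hd : 1 ≤ d) (σk : ℕ → Measure (S.Xd d))
    (hRk : ∀ k, S.IsRadon d (σk k)) (n0 : ℕ)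
    (h1 : ∀ᶠ k in atTop, 0 < σk k (S.towerD d n0))
    (h2 : ∀ n : ℕ, n0 < n → ∃ C : ℝ≥0∞, C ≠ ⊤ ∧
      ∀ k, σk k (S.towerD d n) / σk k (S.towerD d n0) ≤ C) :
    ∃ (φ : ℕ → ℕ) (σ : Measure (S.Xd d)), StrictMono φ ∧ σ ≠ 0 ∧ S.IsRadon d σ ∧
      S.RTendsto d (fun j => σk (φ j)) σ := by
  let U : Ultrafilter ℕ := hyperfilter ℕ
  have hU : (U : Filter ℕ) ≤ atTop := Nat.hyperfilter_le_atTop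
  let τ : ℕ → Measure (S.Xd d) := fun k => (σk k (S.towerD d n0))⁻¹ • σk k
  have hτ : ∀ k A, τ k A = σk k A / σk k (S.towerD d n0) := fun k A => by
    simp [τ, ENNReal.div_eq_inv_mul]
  obtain ⟨σ, hσ⟩ := exists_ultralimit_measure (S.isTopologicalBasis_compactOpen d) U τ
  have hone : σ (S.towerD d n0) = 1 := by
    refine tendsto_nhds_unique (hσ _ (S.isCompact_towerD d n0) (S.isOpen_towerD d n0)) ?_
    refine tendsto_const_nhds.congr' ?_
    filter_upwards [hU h1] with k hk
    rw [hτ, ENNReal.div_self hk.ne' (hRk k n0).ne]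
  have hrad : S.IsRadon d σ := by
    have hbig : ∀ n, n0 < n → σ (S.towerD d n) < ⊤ := by
      intro n hn
      obtain ⟨C, hC, hle⟩ := h2 n hn
      refine lt_of_le_of_lt (le_of_tendsto'
        (hσ _ (S.isCompact_towerD d n) (S.isOpen_towerD d n)) fun k => ?_) hC.lt_top
      rw [hτ]
      exact hle k
    intro n
    exact (measure_mono (S.towerD_mono d (le_max_left n (n0 + 1)))).trans_lt
      (hbig _ (by omega))
  -- The countably many values on towers and boxes form a point of a compact metrizable cube;
  -- their ultrafilter limit is a cluster point there, hence a limit along a subsequence.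
  let u : ℕ → (ℕ → ℝ≥0∞) × (ℕ × (Fin d → ℕ) → ℝ≥0∞) := fun k =>
    (fun n => τ k (S.towerD d n), fun p => τ k (S.box d p.1 p.2))
  have hu : Tendsto u U (𝓝 (fun n => σ (S.towerD d n), fun p => σ (S.box d p.1 p.2))) := by
    refine Tendsto.prodMk_nhds (tendsto_pi_nhds.2 fun n => ?_) (tendsto_pi_nhds.2 fun p => ?_)
    · exact hσ _ (S.isCompact_towerD d n) (S.isOpen_towerD d n)
    · exact hσ _ (S.isCompact_box d p.1 p.2) (S.isClopen_box d p.1 p.2).2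
  obtain ⟨φ, hφ, hlim⟩ := (hu.mapClusterPt.mono hU).tendsto_subseq
  have hT : ∀ n, Tendsto (fun j => τ (φ j) (S.towerD d n)) atTop (𝓝 (σ (S.towerD d n))) :=
    fun n => tendsto_pi_nhds.1 ((continuous_fst.tendsto _).comp hlim) n
  have hB : ∀ n v, Tendsto (fun j => τ (φ j) (S.box d n v)) atTop (𝓝 (σ (S.box d n v))) :=
    fun n v => tendsto_pi_nhds.1 ((continuous_snd.tendsto _).comp hlim) (n, v)
  refine ⟨φ, σ, hφ, ?_, hrad, ?_⟩
  · rintro rfl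
    simp at hone
  · intro n hn
    refine ⟨?_, ?_⟩
    · filter_upwards [(hT n).eventually (lt_mem_nhds hn)] with j hj
      rw [hτ] at hj
      exact (ENNReal.div_pos_iff.1 hj).1.bot_lt
    · rintro B ⟨v, -, rfl⟩
      refine (ENNReal.Tendsto.div (hB n v) (Or.inr hn.ne') (hT n) (Or.inl (hrad n).ne)).congr' ?_
      filter_upwards [hφ.tendsto_atTop.eventually h1] with j hj
      simp only [τ, Measure.smul_apply, smul_eq_mul]
      exact ENNReal.mul_div_mul_left _ _ (ENNReal.inv_ne_zero.2 (hRk _ n0).ne)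
        (ENNReal.inv_ne_top.2 hj.ne')
end
end
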